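/- Let 1 ≤ p_- < p_+ < ∞, q_1 ∈ [p_-, p_+], q ∈ (p_-, p_+), and let w_1 ∈ A_{q_1/p_-}(ℝ^d) ∩ RH_{(p_+/q_1)'}(ℝ^d) and w ∈ A_{q/p_-}(ℝ^d) ∩ RH_{(p_+/q)'}(ℝ^d). Then there exist q_0 ∈ (p_-, p_+), a weight w_0 ∈ A_{q_0/p_-}(ℝ^d) ∩ RH_{(p_+/q_0)'}(ℝ^d), and θ ∈ (0,1) such that 1/q = (1-θ)/q_0 + θ/q_1 and w^{1/q} = w_0^{(1-θ)/q_0} w_1^{θ/q_1}. -/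

import Mathlib

open MeasureTheory Filter Topology ENNReal NNReal
noncomputable section

/-- Shorthand: `ENNReal.ofReal`. -/
def oR (t : ℝ) : ℝ≥0∞ := ENNReal.ofReal t

/-- An axis-parallel cube in `ℝ^d`. -/
def IsCube {d : ℕ} (Q : Set (Fin d → ℝ)) : Prop :=
  ∃ (a : Fin d → ℝ) (r : ℝ), 0 < r ∧ Q = Set.univ.pi fun i => Set.Icc (a i) (a i + r)

/-- The `ℝ≥0∞`-valued average of `g` over a set `Q`. -/
def avgE {d : ℕ} (Q : Set (Fin d → ℝ)) (g : (Fin d → ℝ) → ℝ≥0∞) : ℝ≥0∞ :=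
  (volume Q)⁻¹ * ∫⁻ x in Q, g x

/-- A weight: locally integrable and a.e. positive. -/
def IsWeight {d : ℕ} (w : (Fin d → ℝ) → ℝ) : Prop :=
  MeasureTheory.LocallyIntegrable w volume ∧ ∀ᵐ x ∂(volume : Measure (Fin d → ℝ)), 0 < w x

/-- The Muckenhoupt `A_p` constant, `1 < p < ∞`. -/
def ApConst {d : ℕ} (p : ℝ) (w : (Fin d → ℝ) → ℝ) : ℝ≥0∞ :=
  ⨆ Q : {S : Set (Fin d → ℝ) // IsCube S},
    avgE Q.1 (fun x => oR (w x)) *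
      (avgE Q.1 fun x => oR (w x ^ (-(1:ℝ) / (p - 1)))) ^ (p - 1)

/-- The Muckenhoupt `A_1` constant. -/
def A1Const {d : ℕ} (w : (Fin d → ℝ) → ℝ) : ℝ≥0∞ :=
  ⨆ Q : {S : Set (Fin d → ℝ) // IsCube S},
    avgE Q.1 (fun x => oR (w x)) *
      essSup (fun x => oR ((w x)⁻¹)) (volume.restrict Q.1)

/-- Membership in the Muckenhoupt class `A_p(ℝ^d)`, `1 < p < ∞`. -/
def MemAp {d : ℕ} (p : ℝ) (w : (Fin d → ℝ) → ℝ) : Prop :=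
  IsWeight w ∧ ApConst p w < ⊤

/-- The Muckenhoupt–Wheeden `A_{p,q}` constant:
`sup_Q ⟨w^q⟩_Q^{1/q} ⟨w^{-p'}⟩_Q^{1/p'}` with `p' = p/(p-1)`. -/
def ApqConst {d : ℕ} (p q : ℝ) (w : (Fin d → ℝ) → ℝ) : ℝ≥0∞ :=
  ⨆ Q : {S : Set (Fin d → ℝ) // IsCube S},
    (avgE Q.1 fun x => oR (w x ^ q)) ^ (1 / q) *
      (avgE Q.1 fun x => oR (w x ^ (-(p / (p - 1))))) ^ ((p - 1) / p)

/-- Membership in `A_{p,q}(ℝ^d)`. -/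
def MemApq {d : ℕ} (p q : ℝ) (w : (Fin d → ℝ) → ℝ) : Prop :=
  IsWeight w ∧ ApqConst p q w < ⊤

/-- The reverse Hölder constant `sup_Q ⟨w^s⟩_Q^{1/s} ⟨w⟩_Q^{-1}`. -/
def RHConst {d : ℕ} (s : ℝ) (w : (Fin d → ℝ) → ℝ) : ℝ≥0∞ :=
  ⨆ Q : {S : Set (Fin d → ℝ) // IsCube S},
    (avgE Q.1 fun x => oR (w x ^ s)) ^ (1 / s) * (avgE Q.1 fun x => oR (w x))⁻¹

/-- Membership in the reverse Hölder class `RH_s(ℝ^d)`. -/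
def MemRH {d : ℕ} (s : ℝ) (w : (Fin d → ℝ) → ℝ) : Prop :=
  IsWeight w ∧ RHConst s w < ⊤

/-- Conjugate exponent `t' = t/(t-1)`. -/
def conjExp (t : ℝ) : ℝ := t / (t - 1)

/-- Membership in the limited-range class `A_{q/p_-} ∩ RH_{(p_+/q)'}`, with the
convention that for `q = p_-` the condition is the `A_1` condition and for `q = p_+`
the reverse Hölder condition is vacuous. -/
def MemLR {d : ℕ} (pm pp q : ℝ) (w : (Fin d → ℝ) → ℝ) : Prop :=
  IsWeight w ∧ (q = pm → A1Const w < ⊤) ∧ (pm < q → ApConst (q / pm) w < ⊤) ∧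
    (q < pp → RHConst (conjExp (pp / q)) w < ⊤)

/-- The weighted `L^p` (quasi-)norm `(∫ |f|^p w)^{1/p}`, `ℝ≥0∞`-valued. -/
def wnorm {d : ℕ} (p : ℝ) (w : (Fin d → ℝ) → ℝ) (f : (Fin d → ℝ) → ℂ) : ℝ≥0∞ :=
  (∫⁻ x, (‖f x‖₊ : ℝ≥0∞) ^ p * oR (w x)) ^ (1 / p)

/-- Membership in the weighted Lebesgue space `L^p(w)`. -/
def MemWLp {d : ℕ} (p : ℝ) (w : (Fin d → ℝ) → ℝ) (f : (Fin d → ℝ) → ℂ) : Prop :=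
  AEStronglyMeasurable f (volume : Measure (Fin d → ℝ)) ∧ wnorm p w f < ⊤

/-- `T` is bounded from `L^p(w)` to `L^q(v)`. -/
def BoundedOp {d : ℕ} (p : ℝ) (w : (Fin d → ℝ) → ℝ) (q : ℝ) (v : (Fin d → ℝ) → ℝ)
    (T : ((Fin d → ℝ) → ℂ) →ₗ[ℂ] ((Fin d → ℝ) → ℂ)) : Prop :=
  ∃ C : ℝ≥0, ∀ f, MemWLp p w f → wnorm q v (T f) ≤ C * wnorm p w f

/-- `T` is compact with respect to an input norm `Nin` and an output norm `Nout`: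
every norm-bounded sequence of (a.e. strongly measurable) functions has a subsequence
whose image converges in the output norm. -/
def CompactWithNorms {d : ℕ} (Nin Nout : ((Fin d → ℝ) → ℂ) → ℝ≥0∞)
    (T : ((Fin d → ℝ) → ℂ) →ₗ[ℂ] ((Fin d → ℝ) → ℂ)) : Prop :=
  ∀ f : ℕ → ((Fin d → ℝ) → ℂ),
    (∀ n, AEStronglyMeasurable (f n) (volume : Measure (Fin d → ℝ))) →
    (∀ n, Nin (f n) ≤ 1) →
    ∃ (φ : ℕ → ℕ) (g : (Fin d → ℝ) → ℂ), StrictMono φ ∧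
      Tendsto (fun n => Nout (T (f (φ n)) - g)) atTop (nhds 0)

/-- `T` is a compact operator from `L^p(w)` to `L^q(v)`. -/
def CompactOp {d : ℕ} (p : ℝ) (w : (Fin d → ℝ) → ℝ) (q : ℝ) (v : (Fin d → ℝ) → ℝ)
    (T : ((Fin d → ℝ) → ℂ) →ₗ[ℂ] ((Fin d → ℝ) → ℂ)) : Prop :=
  CompactWithNorms (wnorm p w) (wnorm q v) T

/-- The closed unit strip in `ℂ`. -/
def strip : Set ℂ := {z | 0 ≤ z.re ∧ z.re ≤ 1}

/-- The open unit strip in `ℂ`. -/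
def stripInt : Set ℂ := {z | 0 < z.re ∧ z.re < 1}

/-- The norm of Calderón's complex interpolation space `[L^{p₀}(w₀), L^{p₁}(w₁)]_θ`
realized via analytic families of functions on the strip. -/
def interpNorm {d : ℕ} (p0 : ℝ) (w0 : (Fin d → ℝ) → ℝ) (p1 : ℝ) (w1 : (Fin d → ℝ) → ℝ)
    (θ : ℝ) (f : (Fin d → ℝ) → ℂ) : ℝ≥0∞ :=
  ⨅ (F : ℂ → (Fin d → ℝ) → ℂ) (_ : F (θ : ℂ) = f)
    (_ : ∀ᵐ x ∂(volume : Measure (Fin d → ℝ)),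
      ContinuousOn (fun z => F z x) strip ∧ DifferentiableOn ℂ (fun z => F z x) stripInt),
    max (⨆ t : ℝ, wnorm p0 w0 (F (t * Complex.I)))
        (⨆ t : ℝ, wnorm p1 w1 (F (1 + t * Complex.I)))

/-- An admissible growth function `φ : [0,∞) → [1,∞)`. -/
def Admissible (φ : ℝ → ℝ) : Prop :=
  (∀ t, 0 ≤ t → 1 ≤ φ t) ∧ MonotoneOn φ (Set.Ici 0) ∧
    ∃ ω > (0:ℝ), ∃ C > (0:ℝ), ∀ ζ t : ℝ, 1 ≤ ζ → 0 ≤ t → φ (ζ * t) ≤ C * ζ ^ ω * φ t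

/-- The `A_p^ζ(φ)` constant of Tang/Wu–Wang. -/
def ApZConst {d : ℕ} (φ : ℝ → ℝ) (ζ p : ℝ) (w : (Fin d → ℝ) → ℝ) : ℝ≥0∞ :=
  ⨆ Q : {S : Set (Fin d → ℝ) // IsCube S},
    avgE Q.1 (fun x => oR (w x)) *
      (avgE Q.1 fun x => oR (w x ^ (-(1:ℝ) / (p - 1)))) ^ (p - 1) *
      (oR (φ ((volume Q.1).toReal) ^ (ζ * p)))⁻¹

/-- Membership in `A_p^ζ(φ)`. -/
def MemApZ {d : ℕ} (φ : ℝ → ℝ) (ζ p : ℝ) (w : (Fin d → ℝ) → ℝ) : Prop :=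
  IsWeight w ∧ ApZConst φ ζ p w < ⊤

/-!
For `pm < q < pp`, a weight `w` lies in `A_{q/pm} ∩ RH_{(pp/q)'}` if and only if `v = w ^ (1 / q)`
satisfies `sup_Q ‖v‖_{1/s, Q} ‖v⁻¹‖_{1/t, Q} < ∞` with `s = 1/q - 1/pp` and `t = 1/pm - 1/q`, where
`‖·‖_{p, Q}` is the normalized `L^p` norm on the cube `Q`. By Hölder's inequality this two-sided
condition is stable under inverses, powers and products, with `(s, t)` scaling and adding
accordingly. It is moreover open in `(s, t)`: it implies a quantitative `A_∞` estimate, and hence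
Gehring's self-improvement of integrability. Therefore `v * w₁ ^ (-θ / q₁)` satisfies, for small
`θ > 0`, the condition required of `w₀ ^ ((1 - θ) / q₀)`, and this determines `q₀` and `w₀`.

The self-improvement is proved for averages over dyadic boxes of generation at most `n`, by
induction on `n` and with constants independent of `n`; starting from bounded functions in this way
replaces an a priori assumption of higher integrability.
-/

section Measure

variable {α : Type*} {m : MeasurableSpace α} {μ : Measure α} {w : α → ℝ} {s t : ℝ}

theorem eLpNorm'_mul_le_mul_eLpNorm' {f g : α → ℝ} (hf : AEStronglyMeasurable f μ)
    (hg : AEStronglyMeasurable g μ) (hs : 0 < s) (ht : 0 < t) :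
    eLpNorm' (f * g) (s + t)⁻¹ μ ≤ eLpNorm' f s⁻¹ μ * eLpNorm' g t⁻¹ μ :=
  eLpNorm'_smul_le_mul_eLpNorm' hg hf (by positivity) (by gcongr; linarith)
    (by simp only [one_div, inv_inv])

theorem eLpNorm'_rpow_eq_rpow_eLpNorm' {σ : ℝ} (hw : ∀ᵐ x ∂μ, 0 ≤ w x) (hσ : 0 < σ) :
    eLpNorm' (fun x => w x ^ σ) (σ * s)⁻¹ μ = eLpNorm' w s⁻¹ μ ^ σ := by
  have hcongr : ∀ᵐ x ∂μ, ‖w x ^ σ‖ₑ = ‖‖w x‖ₑ ^ σ‖ₑ := by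
    filter_upwards [hw] with x hx
    rw [Real.enorm_rpow_of_nonneg hx hσ.le, enorm_eq_self]
  rw [eLpNorm'_congr_enorm_ae hcongr, eLpNorm'_enorm_rpow _ _ _ hσ, mul_comm σ, mul_inv,
    inv_mul_cancel_right₀ hσ.ne']

theorem measure_univ_rpow_le_eLpNorm'_mul_eLpNorm'_inv (hw : AEMeasurable w μ)
    (hpos : ∀ᵐ x ∂μ, 0 < w x) (hs : 0 < s) (ht : 0 < t) :
    μ Set.univ ^ (s + t) ≤ eLpNorm' w s⁻¹ μ * eLpNorm' w⁻¹ t⁻¹ μ := by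
  have hone : w * w⁻¹ =ᵐ[μ] fun _ => (1 : ℝ) := by
    filter_upwards [hpos] with x hx using mul_inv_cancel₀ hx.ne'
  calc μ Set.univ ^ (s + t) = eLpNorm' (w * w⁻¹) (s + t)⁻¹ μ := by
        rw [eLpNorm'_congr_ae (g := fun _ => (1 : ℝ)) hone, eLpNorm'_const _ (by positivity)]
        simp
    _ ≤ eLpNorm' w s⁻¹ μ * eLpNorm' w⁻¹ t⁻¹ μ :=
      eLpNorm'_mul_le_mul_eLpNorm' hw.aestronglyMeasurable hw.inv.aestronglyMeasurable hs ht

theorem lintegral_enorm_rpow_le_of_one_le_two_mul {C : ℝ≥0∞} {T : Set α}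
    (hw : AEMeasurable w μ) (hpos : ∀ᵐ x ∂μ, 0 < w x) (hs : 0 < s) (ht : 0 < t)
    (hC : eLpNorm' w s⁻¹ μ * eLpNorm' w⁻¹ t⁻¹ μ ≤ C) (hT : 1 ≤ 2 * μ T) :
    ∫⁻ x, ‖w x‖ₑ ^ s⁻¹ ∂μ ≤ (2 ^ (s + t) * C) ^ s⁻¹ * ∫⁻ x in T, ‖w x‖ₑ ^ s⁻¹ ∂μ := by
  have hst : 0 ≤ s + t := by positivity
  have hnorm : eLpNorm' w s⁻¹ μ ≤ 2 ^ (s + t) * C * eLpNorm' w s⁻¹ (μ.restrict T) :=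
    calc eLpNorm' w s⁻¹ μ
        ≤ (2 * μ T) ^ (s + t) * eLpNorm' w s⁻¹ μ :=
          le_mul_of_one_le_left' (ENNReal.one_le_rpow hT (by positivity))
      _ = 2 ^ (s + t) * (μ.restrict T Set.univ) ^ (s + t) * eLpNorm' w s⁻¹ μ := by
          rw [ENNReal.mul_rpow_of_nonneg _ _ hst, Measure.restrict_apply_univ]
      _ ≤ 2 ^ (s + t) * (eLpNorm' w s⁻¹ (μ.restrict T) * eLpNorm' w⁻¹ t⁻¹ μ) *
            eLpNorm' w s⁻¹ μ := by
          gcongr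
          refine (measure_univ_rpow_le_eLpNorm'_mul_eLpNorm'_inv hw.restrict
            (ae_restrict_of_ae hpos) hs ht).trans ?_
          gcongr
          exact Measure.restrict_le_self
      _ = 2 ^ (s + t) * (eLpNorm' w s⁻¹ μ * eLpNorm' w⁻¹ t⁻¹ μ) *
            eLpNorm' w s⁻¹ (μ.restrict T) := by ring
      _ ≤ 2 ^ (s + t) * C * eLpNorm' w s⁻¹ (μ.restrict T) := by gcongr
  rw [lintegral_rpow_enorm_eq_rpow_eLpNorm' (inv_pos.2 hs),
    lintegral_rpow_enorm_eq_rpow_eLpNorm' (inv_pos.2 hs),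
    ← ENNReal.mul_rpow_of_nonneg _ _ (inv_pos.2 hs).le]
  gcongr

end Measure

section DyadicBoxes

open BoxIntegral

variable {ι : Type*}

/-- A box all of whose sides have length `r`. -/
def IsCubicBox (I : Box ι) (r : ℝ) : Prop :=
  0 < r ∧ ∀ i, I.upper i - I.lower i = r

namespace IsCubicBox

variable {I : Box ι} {r : ℝ}

theorem splitCenterBox (h : IsCubicBox I r) (s : Set ι) :
    IsCubicBox (I.splitCenterBox s) (r / 2) :=
  ⟨half_pos h.1, fun i => by rw [Box.upper_sub_lower_splitCenterBox, h.2]⟩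

theorem Icc_eq_closedBall [Fintype ι] (h : IsCubicBox I r) :
    Box.Icc I = Metric.closedBall (fun i => I.lower i + r / 2) (r / 2) := by
  rw [closedBall_pi _ (half_pos h.1).le, Box.Icc_eq_pi]
  congr! 2 with i
  rw [Real.closedBall_eq_Icc, ← h.2 i]
  congr 1 <;> ring

end IsCubicBox

variable [Fintype ι]

theorem volume_box_ne_zero (I : Box ι) : volume (I : Set (ι → ℝ)) ≠ 0 := by
  rw [Box.coe_eq_pi, Real.volume_pi_Ioc, Finset.prod_ne_zero_iff]
  simp

theorem volume_box_ne_top (I : Box ι) : volume (I : Set (ι → ℝ)) ≠ ∞ :=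
  (I.measure_coe_lt_top volume).ne

theorem two_pow_mul_volume_splitCenterBox (I : Box ι) (s : Set ι) :
    2 ^ Fintype.card ι * volume (I.splitCenterBox s : Set (ι → ℝ)) =
      volume (I : Set (ι → ℝ)) := by
  simp only [Box.coe_eq_pi, Real.volume_pi_Ioc, Box.upper_sub_lower_splitCenterBox]
  rw [← Finset.card_univ, ← Finset.prod_const, ← Finset.prod_mul_distrib]
  refine Finset.prod_congr rfl fun i _ => ?_
  rw [← ENNReal.ofReal_ofNat 2, ← ENNReal.ofReal_mul zero_le_two, mul_div_cancel₀ _ two_ne_zero]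

theorem lintegral_box_eq_sum_splitCenterBox (μ : Measure (ι → ℝ)) (I : Box ι)
    (f : (ι → ℝ) → ℝ≥0∞) :
    ∫⁻ x in I, f x ∂μ = ∑ s : Set ι, ∫⁻ x in I.splitCenterBox s, f x ∂μ := by
  rw [← I.iUnion_coe_splitCenterBox,
    lintegral_iUnion (fun s => (I.splitCenterBox s).measurableSet_coe)
      (fun s t hst => I.disjoint_splitCenterBox hst), tsum_fintype]

theorem setLAverage_splitCenterBox_le (u : (ι → ℝ) → ℝ≥0∞) (I : Box ι) (s : Set ι) :
    ⨍⁻ x in I.splitCenterBox s, u x ∂volume ≤ 2 ^ Fintype.card ι * ⨍⁻ x in I, u x ∂volume := by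
  rw [setLAverage_eq, setLAverage_eq, ← two_pow_mul_volume_splitCenterBox I s,
    ENNReal.div_eq_inv_mul, ENNReal.div_eq_inv_mul, ENNReal.mul_inv (by simp) (by simp),
    ← mul_assoc, ← mul_assoc, ENNReal.mul_inv_cancel (by simp) (by simp), one_mul]
  gcongr
  exact I.splitCenterBox_le s

/-- The conditional expectation of `u` with respect to the partition of `I` into its `n`-th
generation dyadic subboxes. -/
def dyadicAverage (u : (ι → ℝ) → ℝ≥0∞) : ℕ → Box ι → (ι → ℝ) → ℝ≥0∞
  | 0, I, _ => ⨍⁻ y in I, u y ∂volume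
  | n + 1, I, x => ∑ s : Set ι, (I.splitCenterBox s : Set (ι → ℝ)).indicator
      (dyadicAverage u n (I.splitCenterBox s)) x

/-- The part of `I` covered by the dyadic subboxes of generation at most `n` on which the average
of `u` exceeds `l`. -/
def dyadicLevelSet (u : (ι → ℝ) → ℝ≥0∞) (l : ℝ≥0∞) (n : ℕ) (I : Box ι) : Set (ι → ℝ) :=
  {x | x ∈ I ∧ ∃ m ≤ n, l < dyadicAverage u m I x}

section

variable {u : (ι → ℝ) → ℝ≥0∞} {l : ℝ≥0∞} {I : Box ι} {n : ℕ}

theorem measurable_dyadicAverage (u : (ι → ℝ) → ℝ≥0∞) (n : ℕ) (I : Box ι) :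
    Measurable (dyadicAverage u n I) := by
  induction n generalizing I with
  | zero => exact measurable_const
  | succ n ih =>
    exact Finset.measurable_sum _ fun s _ =>
      (ih _).indicator (I.splitCenterBox s).measurableSet_coe

theorem dyadicAverage_succ_of_mem {s : Set ι} {x : ι → ℝ} (hx : x ∈ I.splitCenterBox s) :
    dyadicAverage u (n + 1) I x = dyadicAverage u n (I.splitCenterBox s) x := by
  rw [dyadicAverage, Finset.sum_eq_single s]
  · exact Set.indicator_of_mem hx _
  · exact fun t _ hts => Set.indicator_of_notMem
      (Set.disjoint_right.1 (I.disjoint_splitCenterBox hts) hx) _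
  · simp

theorem exists_dyadicAverage_eq_setLAverage {r : ℝ} (hI : IsCubicBox I r)
    {x : ι → ℝ} (hx : x ∈ I) :
    ∃ J : Box ι, IsCubicBox J (r / 2 ^ n) ∧ x ∈ J ∧ J ≤ I ∧
      dyadicAverage u n I x = ⨍⁻ y in J, u y ∂volume := by
  induction n generalizing I r with
  | zero => exact ⟨I, by simpa using hI, hx, le_rfl, rfl⟩
  | succ n ih =>
    obtain ⟨s, hs⟩ := Box.exists_mem_splitCenterBox.2 hx
    obtain ⟨J, hJ, hxJ, hJI, hav⟩ := ih (hI.splitCenterBox s) hs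
    refine ⟨J, ?_, hxJ, hJI.trans (I.splitCenterBox_le s), dyadicAverage_succ_of_mem hs ▸ hav⟩
    rwa [pow_succ', ← div_div]

theorem dyadicLevelSet_subset : dyadicLevelSet u l n I ⊆ (I : Set (ι → ℝ)) := fun _ hx => hx.1

theorem measurableSet_dyadicLevelSet : MeasurableSet (dyadicLevelSet u l n I) := by
  have h : dyadicLevelSet u l n I =
      (I : Set (ι → ℝ)) ∩ ⋃ m, ⋃ _ : m ≤ n, {x | l < dyadicAverage u m I x} := by
    ext x; simp [dyadicLevelSet]
  rw [h]
  exact I.measurableSet_coe.inter <| .iUnion fun m => .iUnion fun _ =>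
    measurableSet_lt measurable_const (measurable_dyadicAverage u m I)

theorem dyadicLevelSet_of_lt (h : l < ⨍⁻ x in I, u x ∂volume) : dyadicLevelSet u l n I = I :=
  dyadicLevelSet_subset.antisymm fun _ hx => ⟨hx, 0, n.zero_le, h⟩

theorem dyadicLevelSet_zero_of_le (h : ⨍⁻ x in I, u x ∂volume ≤ l) :
    dyadicLevelSet u l 0 I = ∅ := by
  ext x
  simp [dyadicLevelSet, dyadicAverage, h.not_gt]

theorem dyadicLevelSet_succ_inter_splitCenterBox (h : ⨍⁻ x in I, u x ∂volume ≤ l) (s : Set ι) :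
    dyadicLevelSet u l (n + 1) I ∩ I.splitCenterBox s =
      dyadicLevelSet u l n (I.splitCenterBox s) := by
  ext x
  constructor
  · rintro ⟨⟨-, m, hm, hlt⟩, hx⟩
    cases m with
    | zero => exact absurd hlt h.not_gt
    | succ m => exact ⟨hx, m, by omega, dyadicAverage_succ_of_mem hx ▸ hlt⟩
  · rintro ⟨hx, m, hm, hlt⟩
    exact ⟨⟨I.splitCenterBox_le s hx, m + 1, by omega,
      (dyadicAverage_succ_of_mem hx).symm ▸ hlt⟩, hx⟩

theorem lintegral_dyadicLevelSet_succ (h : ⨍⁻ x in I, u x ∂volume ≤ l) (f : (ι → ℝ) → ℝ≥0∞) :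
    ∫⁻ x in dyadicLevelSet u l (n + 1) I, f x =
      ∑ s : Set ι, ∫⁻ x in dyadicLevelSet u l n (I.splitCenterBox s), f x := by
  calc ∫⁻ x in dyadicLevelSet u l (n + 1) I, f x
      = ∫⁻ x in I, f x ∂volume.restrict (dyadicLevelSet u l (n + 1) I) := by
        rw [Measure.restrict_restrict I.measurableSet_coe,
          Set.inter_eq_right.2 dyadicLevelSet_subset]
    _ = ∑ s : Set ι, ∫⁻ x in I.splitCenterBox s, f x
          ∂volume.restrict (dyadicLevelSet u l (n + 1) I) :=
        lintegral_box_eq_sum_splitCenterBox _ _ _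
    _ = _ := Finset.sum_congr rfl fun s _ => by
        rw [Measure.restrict_restrict (I.splitCenterBox s).measurableSet_coe, Set.inter_comm,
          dyadicLevelSet_succ_inter_splitCenterBox h]

theorem mul_volume_dyadicLevelSet_le :
    l * volume (dyadicLevelSet u l n I) ≤ ∫⁻ x in dyadicLevelSet u l n I, u x := by
  rw [← setLIntegral_const]
  induction n generalizing I with
  | zero =>
    rcases lt_or_ge l (⨍⁻ x in I, u x ∂volume) with h | h
    · rw [dyadicLevelSet_of_lt h, setLIntegral_const,
        ← measure_mul_setLAverage u (volume_box_ne_top I), mul_comm]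
      gcongr
    · simp [dyadicLevelSet_zero_of_le h]
  | succ n ih =>
    rcases lt_or_ge l (⨍⁻ x in I, u x ∂volume) with h | h
    · rw [dyadicLevelSet_of_lt h, setLIntegral_const,
        ← measure_mul_setLAverage u (volume_box_ne_top I), mul_comm]
      gcongr
    · rw [lintegral_dyadicLevelSet_succ h, lintegral_dyadicLevelSet_succ h]
      exact Finset.sum_le_sum fun s _ => ih

-- Stop at the first generation on which the average exceeds `l`: a stopped box has average at most
-- `2 ^ card ι * l`, and `hK` applies on it, while `u` is averaged to at most `l` off these boxes.
theorem lintegral_dyadicAverage_rpow_le_of_setLAverage_le {K : ℝ≥0∞} {ε r : ℝ} (hε : 0 < ε)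
    (hK : ∀ m < n, ∀ (J : Box ι) (ρ : ℝ), IsCubicBox J ρ →
      ∫⁻ x in J, dyadicAverage u m J x ^ (1 + ε) ≤
        K * (⨍⁻ x in J, u x ∂volume) ^ ε * ∫⁻ x in J, u x)
    {m : ℕ} (hm : m ≤ n) (hI : IsCubicBox I r) (hl : ⨍⁻ x in I, u x ∂volume ≤ l) :
    ∫⁻ x in I, dyadicAverage u m I x ^ (1 + ε) ≤
      l ^ ε * (∫⁻ x in I, u x) +
        K * (2 ^ Fintype.card ι * l) ^ ε * ∫⁻ x in dyadicLevelSet u l m I, u x := by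
  induction m generalizing I r with
  | zero =>
    refine le_trans ?_ le_self_add
    simp only [dyadicAverage, setLIntegral_const]
    rw [add_comm, ENNReal.rpow_add_of_nonneg _ _ hε.le zero_le_one, ENNReal.rpow_one, mul_assoc,
      mul_comm (⨍⁻ x in I, u x ∂volume), measure_mul_setLAverage u (volume_box_ne_top I)]
    gcongr
  | succ m ih =>
    rw [lintegral_box_eq_sum_splitCenterBox, lintegral_box_eq_sum_splitCenterBox,
      lintegral_dyadicLevelSet_succ hl, Finset.mul_sum, Finset.mul_sum, ← Finset.sum_add_distrib]
    refine Finset.sum_le_sum fun s _ => ?_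
    have hE : ∫⁻ x in I.splitCenterBox s, dyadicAverage u (m + 1) I x ^ (1 + ε) =
        ∫⁻ x in I.splitCenterBox s, dyadicAverage u m (I.splitCenterBox s) x ^ (1 + ε) :=
      setLIntegral_congr_fun (I.splitCenterBox s).measurableSet_coe fun x hx => by
        rw [dyadicAverage_succ_of_mem hx]
    rw [hE]
    rcases lt_or_ge l (⨍⁻ x in I.splitCenterBox s, u x ∂volume) with hs | hs
    · refine le_trans ?_ le_add_self
      rw [dyadicLevelSet_of_lt hs]
      refine (hK m (by omega) _ _ (hI.splitCenterBox s)).trans ?_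
      gcongr
      exact (setLAverage_splitCenterBox_le u I s).trans (by gcongr)
    · exact ih (by omega) (hI.splitCenterBox s) hs

theorem two_mul_volume_dyadicLevelSet_le (hu₀ : ∫⁻ x in I, u x ≠ 0) (hu : ∫⁻ x in I, u x ≠ ∞) :
    2 * volume (dyadicLevelSet u (2 * ⨍⁻ x in I, u x ∂volume) n I) ≤
      volume (I : Set (ι → ℝ)) := by
  set a := ⨍⁻ x in I, u x ∂volume
  have hIa : volume (I : Set (ι → ℝ)) * a = ∫⁻ x in I, u x :=
    measure_mul_setLAverage u (volume_box_ne_top I)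
  have ha₀ : a ≠ 0 := right_ne_zero_of_mul (hIa ▸ hu₀)
  have ha_top : a ≠ ∞ := (setLAverage_lt_top hu).ne
  rw [← ENNReal.mul_le_mul_iff_left ha₀ ha_top, hIa, mul_right_comm]
  exact mul_volume_dyadicLevelSet_le.trans (lintegral_mono_set dyadicLevelSet_subset)

/-- A quantitative `A_∞` condition: `u` gives mass at most `β u(I)` to every subset of a cubic box
`I` that fills at most half of `I`. -/
def HasAInftyDecay (β : ℝ≥0∞) (u : (ι → ℝ) → ℝ≥0∞) : Prop :=
  ∀ (I : Box ι) (r : ℝ), IsCubicBox I r → ∀ S ⊆ (I : Set (ι → ℝ)), MeasurableSet S →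
    2 * volume S ≤ volume (I : Set (ι → ℝ)) → ∫⁻ x in S, u x ≤ β * ∫⁻ x in I, u x

theorem hasAInftyDecay_of_forall_lintegral_le {D : ℝ≥0∞}
    (hfin : ∀ (J : Box ι) (ρ : ℝ), IsCubicBox J ρ → ∫⁻ x in J, u x ≠ ∞)
    (hD : ∀ (J : Box ι) (ρ : ℝ), IsCubicBox J ρ → ∀ T ⊆ (J : Set (ι → ℝ)), MeasurableSet T →
      volume (J : Set (ι → ℝ)) ≤ 2 * volume T → ∫⁻ x in J, u x ≤ D * ∫⁻ x in T, u x) :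
    HasAInftyDecay (1 - D⁻¹) u := by
  intro I r hI S hSI hS hvol
  have hvolS : volume S + volume (↑I \ S) = volume (I : Set (ι → ℝ)) := by
    have := measure_inter_add_sdiff (μ := volume) (I : Set (ι → ℝ)) hS
    rwa [Set.inter_eq_right.2 hSI] at this
  have hint : (∫⁻ x in S, u x) + ∫⁻ x in ↑I \ S, u x = ∫⁻ x in I, u x := by
    have := lintegral_inter_add_sdiff (μ := volume) u I hS
    rwa [Set.inter_eq_right.2 hSI] at this
  have hT : volume (I : Set (ι → ℝ)) ≤ 2 * volume (↑I \ S) := by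
    have hS_le : volume S ≤ volume (↑I \ S) := by
      rw [← hvolS, two_mul] at hvol
      exact (ENNReal.add_le_add_iff_left
        (measure_ne_top_of_subset hSI (volume_box_ne_top I))).1 hvol
    rw [← hvolS, two_mul]
    gcongr
  have hdiv : (∫⁻ x in I, u x) * D⁻¹ ≤ ∫⁻ x in ↑I \ S, u x :=
    ENNReal.div_le_of_le_mul' <| hD I r hI _ Set.sdiff_subset (I.measurableSet_coe.diff hS) hT
  have hfinI : ∫⁻ x in I, u x ≠ ∞ := hfin I r hI
  calc ∫⁻ x in S, u x = (∫⁻ x in I, u x) - ∫⁻ x in ↑I \ S, u x :=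
        ENNReal.eq_sub_of_add_eq (ne_top_of_le_ne_top hfinI (hint ▸ le_add_self)) hint
    _ ≤ (∫⁻ x in I, u x) - (∫⁻ x in I, u x) * D⁻¹ := by gcongr
    _ = (1 - D⁻¹) * ∫⁻ x in I, u x := by
      rw [ENNReal.sub_mul fun _ _ => hfinI, one_mul, mul_comm]

theorem HasAInftyDecay.lintegral_dyadicLevelSet_le {β : ℝ≥0∞} {r : ℝ} (h : HasAInftyDecay β u)
    (hI : IsCubicBox I r) (hu : ∫⁻ x in I, u x ≠ ∞) :
    ∫⁻ x in dyadicLevelSet u (2 * ⨍⁻ x in I, u x ∂volume) n I, u x ≤ β * ∫⁻ x in I, u x := by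
  rcases eq_or_ne (∫⁻ x in I, u x) 0 with h₀ | h₀
  · exact (lintegral_mono_set dyadicLevelSet_subset).trans (h₀.trans_le zero_le)
  · exact h I r hI _ dyadicLevelSet_subset measurableSet_dyadicLevelSet
      (two_mul_volume_dyadicLevelSet_le h₀ hu)

theorem HasAInftyDecay.lintegral_dyadicAverage_rpow_le {β K : ℝ≥0∞} {ε r : ℝ}
    (h : HasAInftyDecay β u) (hε : 0 < ε)
    (hfin : ∀ (J : Box ι) (ρ : ℝ), IsCubicBox J ρ → ∫⁻ x in J, u x ≠ ∞)
    (hK : 2 ^ ε + K * (2 ^ Fintype.card ι * 2) ^ ε * β ≤ K) (hI : IsCubicBox I r) :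
    ∫⁻ x in I, dyadicAverage u n I x ^ (1 + ε) ≤
      K * (⨍⁻ x in I, u x ∂volume) ^ ε * ∫⁻ x in I, u x := by
  induction n using Nat.strong_induction_on generalizing I r with
  | _ n ih =>
    set a := ⨍⁻ x in I, u x ∂volume
    calc ∫⁻ x in I, dyadicAverage u n I x ^ (1 + ε)
        ≤ (2 * a) ^ ε * (∫⁻ x in I, u x) + K * (2 ^ Fintype.card ι * (2 * a)) ^ ε *
            ∫⁻ x in dyadicLevelSet u (2 * a) n I, u x :=
          lintegral_dyadicAverage_rpow_le_of_setLAverage_le hε (fun m hm J ρ hJ => ih m hm hJ)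
            le_rfl hI (by rw [two_mul]; exact le_self_add)
      _ ≤ (2 * a) ^ ε * (∫⁻ x in I, u x) + K * (2 ^ Fintype.card ι * (2 * a)) ^ ε *
            (β * ∫⁻ x in I, u x) := by
          gcongr
          exact h.lintegral_dyadicLevelSet_le hI (hfin I r hI)
      _ = (2 ^ ε + K * (2 ^ Fintype.card ι * 2) ^ ε * β) * a ^ ε * ∫⁻ x in I, u x := by
          rw [← mul_assoc (2 ^ Fintype.card ι), ENNReal.mul_rpow_of_nonneg _ _ hε.le,
            ENNReal.mul_rpow_of_nonneg _ a hε.le]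
          ring
      _ ≤ K * a ^ ε * ∫⁻ x in I, u x := by gcongr

theorem tendsto_dyadicAverage {r : ℝ} (hu : AEMeasurable u (volume.restrict (I : Set (ι → ℝ))))
    (hI : IsCubicBox I r) (hfin : ∫⁻ x in I, u x ≠ ∞) :
    ∀ᵐ x ∂volume.restrict (I : Set (ι → ℝ)),
      Tendsto (fun n => dyadicAverage u n I x) atTop (𝓝 (u x)) := by
  rw [ae_restrict_iff' I.measurableSet_coe]
  have hmeas : AEMeasurable ((I : Set (ι → ℝ)).indicator u) volume :=
    (aemeasurable_indicator_iff I.measurableSet_coe).2 hu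
  have hint : ∫⁻ x, (I : Set (ι → ℝ)).indicator u x ≠ ∞ := by
    rwa [lintegral_indicator I.measurableSet_coe]
  filter_upwards [(IsUnifLocDoublingMeasure.vitaliFamily
    (volume : Measure (ι → ℝ)) 1).ae_tendsto_lintegral_div hmeas hint] with x hx hxI
  rw [Set.indicator_of_mem hxI] at hx
  choose J hJ hxJ hJI hav using
    fun n => exists_dyadicAverage_eq_setLAverage (u := u) (n := n) hI hxI
  have hradius : Tendsto (fun n : ℕ => r / 2 ^ n / 2) atTop (𝓝[>] 0) := by
    refine tendsto_nhdsWithin_iff.2 ⟨?_, Eventually.of_forall fun n => half_pos (hJ n).1⟩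
    simpa [div_eq_mul_inv] using
      ((tendsto_pow_atTop_nhds_zero_of_lt_one (r := (2 : ℝ)⁻¹) (by norm_num)
        (by norm_num)).const_mul r).mul_const 2⁻¹
  have hball := IsUnifLocDoublingMeasure.tendsto_closedBall_filterAt (volume : Measure (ι → ℝ))
    (K := 1) (x := x) (fun n i => (J n).lower i + r / 2 ^ n / 2) _ hradius
    (Eventually.of_forall fun n => by
      rw [one_mul, ← (hJ n).Icc_eq_closedBall]
      exact Box.coe_subset_Icc (hxJ n))
  refine (hx.comp hball).congr fun n => ?_
  have hae : Metric.closedBall (fun i => (J n).lower i + r / 2 ^ n / 2) (r / 2 ^ n / 2)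
      =ᵐ[volume] (J n : Set (ι → ℝ)) := by
    rw [← (hJ n).Icc_eq_closedBall]
    exact (J n).coe_ae_eq_Icc.symm
  rw [hav n, setLAverage_eq, Function.comp_apply, setLIntegral_congr hae, measure_congr hae]
  congr 1
  exact setLIntegral_congr_fun (J n).measurableSet_coe fun y hy =>
    Set.indicator_of_mem (hJI n hy) u

theorem exists_rpow_mul_lt_one {c β : ℝ≥0∞} (hc : c ≠ ∞) (hβ : β < 1) :
    ∃ ε : ℝ, 0 < ε ∧ c ^ ε * β < 1 := by
  obtain ⟨b, hβb, hb⟩ := exists_between hβ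
  obtain ⟨n, hn, hn₀⟩ := ((ENNReal.eventually_pow_one_div_le hc (ENNReal.one_lt_inv.2 hb)).and
    (eventually_gt_atTop 0)).exists
  refine ⟨1 / n, by positivity, ?_⟩
  calc c ^ (1 / n : ℝ) * β ≤ b⁻¹ * β := by gcongr
    _ < b⁻¹ * b := (ENNReal.mul_lt_mul_iff_right (by simpa using hb.ne_top)
        (by simpa using (zero_le.trans_lt hβb).ne')).2 hβb
    _ = 1 := ENNReal.inv_mul_cancel (zero_le.trans_lt hβb).ne' hb.ne_top

theorem HasAInftyDecay.setLAverage_rpow_le {β K : ℝ≥0∞} {ε r : ℝ} (h : HasAInftyDecay β u)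
    (hu : AEMeasurable u volume) (hε : 0 < ε)
    (hfin : ∀ (J : Box ι) (ρ : ℝ), IsCubicBox J ρ → ∫⁻ x in J, u x ≠ ∞)
    (hK : 2 ^ ε + K * (2 ^ Fintype.card ι * 2) ^ ε * β ≤ K) (hI : IsCubicBox I r) :
    ⨍⁻ x in I, u x ^ (1 + ε) ∂volume ≤ K * (⨍⁻ x in I, u x ∂volume) ^ (1 + ε) := by
  have hlim : ∫⁻ x in I, u x ^ (1 + ε) =
      ∫⁻ x in I, liminf (fun n => dyadicAverage u n I x ^ (1 + ε)) atTop := by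
    refine lintegral_congr_ae ?_
    filter_upwards [tendsto_dyadicAverage hu.restrict hI (hfin I r hI)] with x hx
    exact (hx.ennrpow_const (1 + ε)).liminf_eq.symm
  have hint : ∫⁻ x in I, u x ^ (1 + ε) ≤ K * (⨍⁻ x in I, u x ∂volume) ^ ε * ∫⁻ x in I, u x := by
    rw [hlim]
    refine (lintegral_liminf_le fun n => (measurable_dyadicAverage u n I).pow_const _).trans ?_
    exact liminf_le_of_frequently_le' <| Frequently.of_forall fun n =>
      h.lintegral_dyadicAverage_rpow_le hε hfin hK hI
  calc ⨍⁻ x in I, u x ^ (1 + ε) ∂volume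
      ≤ (K * (⨍⁻ x in I, u x ∂volume) ^ ε * ∫⁻ x in I, u x) / volume (I : Set (ι → ℝ)) := by
        rw [setLAverage_eq]
        gcongr
    _ = K * (⨍⁻ x in I, u x ∂volume) ^ ε * ⨍⁻ x in I, u x ∂volume := by
        rw [mul_div_assoc, ← setLAverage_eq]
    _ = K * (⨍⁻ x in I, u x ∂volume) ^ (1 + ε) := by
        rw [add_comm, ENNReal.rpow_add_of_nonneg _ _ hε.le zero_le_one, ENNReal.rpow_one,
          mul_assoc]

theorem HasAInftyDecay.exists_reverseHolder {β : ℝ≥0∞} (h : HasAInftyDecay β u) (hβ : β < 1)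
    (hu : AEMeasurable u volume)
    (hfin : ∀ (J : Box ι) (ρ : ℝ), IsCubicBox J ρ → ∫⁻ x in J, u x ≠ ∞) :
    ∃ (ε : ℝ) (K : ℝ≥0), 0 < ε ∧ ∀ (I : Box ι) (r : ℝ), IsCubicBox I r →
      ⨍⁻ x in I, u x ^ (1 + ε) ∂volume ≤ K * (⨍⁻ x in I, u x ∂volume) ^ (1 + ε) := by
  obtain ⟨ε, hε, hγ⟩ := exists_rpow_mul_lt_one (c := 2 ^ Fintype.card ι * 2) (by finiteness) hβ
  set γ := (2 ^ Fintype.card ι * 2 : ℝ≥0∞) ^ ε * β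
  have hγ_sub : 1 - γ ≠ 0 := (tsub_pos_of_lt hγ).ne'
  obtain ⟨K, hK⟩ : ∃ K : ℝ≥0, (K : ℝ≥0∞) = 2 ^ ε / (1 - γ) :=
    ⟨_, ENNReal.coe_toNNReal (ENNReal.div_ne_top (by finiteness) hγ_sub)⟩
  have hK_eq : 2 ^ ε + K * (2 ^ Fintype.card ι * 2) ^ ε * β = (K : ℝ≥0∞) :=
    calc 2 ^ ε + K * (2 ^ Fintype.card ι * 2) ^ ε * β
        = K * (1 - γ) + K * γ := by
          rw [mul_assoc, hK, ENNReal.div_mul_cancel hγ_sub (by finiteness)]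
      _ = K := by rw [← mul_add, tsub_add_cancel_of_le hγ.le, mul_one]
  exact ⟨ε, K, hε, fun I r hI => h.setLAverage_rpow_le hu hε hfin hK_eq.le hI⟩

end

end DyadicBoxes

section Cubes

open BoxIntegral ProbabilityTheory

variable {d : ℕ} {Q : Set (Fin d → ℝ)}

theorem IsCubicBox.isCube_Icc {I : Box (Fin d)} {r : ℝ} (h : IsCubicBox I r) :
    IsCube (Box.Icc I) := by
  refine ⟨I.lower, r, h.1, ?_⟩
  rw [Box.Icc_eq_pi]
  congr! with i
  linarith [h.2 i]

theorem IsCube.exists_isCubicBox (hQ : IsCube Q) :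
    ∃ (I : Box (Fin d)) (r : ℝ), IsCubicBox I r ∧ Box.Icc I = Q := by
  obtain ⟨a, r, hr, rfl⟩ := hQ
  refine ⟨⟨a, fun i => a i + r, fun i => by linarith⟩, r, ⟨hr, fun i => by simp⟩, ?_⟩
  rw [Box.Icc_eq_pi]

theorem cond_Icc_box_eq (I : Box (Fin d)) :
    (volume : Measure (Fin d → ℝ))[|Box.Icc I] = volume[|(I : Set (Fin d → ℝ))] := by
  rw [ProbabilityTheory.cond, ProbabilityTheory.cond, measure_congr I.coe_ae_eq_Icc,
    Measure.restrict_congr_set I.coe_ae_eq_Icc]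

theorem setLAverage_eq_lintegral_cond_Icc (I : Box (Fin d)) (f : (Fin d → ℝ) → ℝ≥0∞) :
    ⨍⁻ x in I, f x ∂volume = ∫⁻ x, f x ∂volume[|Box.Icc I] := by
  rw [cond_Icc_box_eq, setLAverage_eq', ProbabilityTheory.cond]

theorem IsCube.isProbabilityMeasure_cond (hQ : IsCube Q) :
    IsProbabilityMeasure (volume : Measure (Fin d → ℝ))[|Q] := by
  obtain ⟨I, r, -, rfl⟩ := hQ.exists_isCubicBox
  rw [cond_Icc_box_eq]
  exact cond_isProbabilityMeasure_of_finite (volume_box_ne_zero I) (volume_box_ne_top I)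

theorem ae_cond_of_ae {p : (Fin d → ℝ) → Prop} (h : ∀ᵐ x, p x) :
    ∀ᵐ x ∂volume[|Q], p x :=
  cond_absolutelyContinuous.ae_le h

/-- The two-sided Muckenhoupt condition `sup_Q ‖w‖_{1/s, Q} ‖w⁻¹‖_{1/t, Q} < ∞`, with normalized
`L^p` norms on cubes. The parameters are reciprocals of integrability exponents, so that powers of
weights scale them and products of weights add them; `A_p` is the case `s = 1`, `t = p - 1`. -/
structure BiMuckenhoupt (s t : ℝ) (w : (Fin d → ℝ) → ℝ) : Prop where
  left_pos : 0 < s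
  right_pos : 0 < t
  aemeasurable : AEMeasurable w
  ae_pos : ∀ᵐ x, 0 < w x
  exists_bound : ∃ C : ℝ≥0, ∀ Q, IsCube Q →
    eLpNorm' w s⁻¹ volume[|Q] * eLpNorm' w⁻¹ t⁻¹ volume[|Q] ≤ C

namespace BiMuckenhoupt

variable {s t s' t' : ℝ} {w w' : (Fin d → ℝ) → ℝ}

theorem inv (h : BiMuckenhoupt s t w) : BiMuckenhoupt t s w⁻¹ where
  left_pos := h.right_pos
  right_pos := h.left_pos
  aemeasurable := h.aemeasurable.inv
  ae_pos := h.ae_pos.mono fun _ => inv_pos.2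
  exists_bound := by simpa only [inv_inv, mul_comm] using h.exists_bound

theorem rpow {σ : ℝ} (h : BiMuckenhoupt s t w) (hσ : 0 < σ) :
    BiMuckenhoupt (σ * s) (σ * t) (fun x => w x ^ σ) where
  left_pos := mul_pos hσ h.left_pos
  right_pos := mul_pos hσ h.right_pos
  aemeasurable := h.aemeasurable.pow_const σ
  ae_pos := h.ae_pos.mono fun _ hx => Real.rpow_pos_of_pos hx σ
  exists_bound := by
    obtain ⟨C, hC⟩ := h.exists_bound
    refine ⟨C ^ σ, fun Q hQ => ?_⟩
    have hinv : (fun x => w x ^ σ)⁻¹ =ᵐ[volume[|Q]] fun x => w⁻¹ x ^ σ :=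
      ae_cond_of_ae <| h.ae_pos.mono fun x hx => (Real.inv_rpow hx.le σ).symm
    rw [eLpNorm'_congr_ae hinv,
      eLpNorm'_rpow_eq_rpow_eLpNorm' (ae_cond_of_ae (h.ae_pos.mono fun _ => le_of_lt)) hσ,
      eLpNorm'_rpow_eq_rpow_eLpNorm' (ae_cond_of_ae (h.inv.ae_pos.mono fun _ => le_of_lt)) hσ,
      ← ENNReal.mul_rpow_of_nonneg _ _ hσ.le, ENNReal.coe_rpow_of_nonneg _ hσ.le]
    gcongr
    exact hC Q hQ

theorem mono (h : BiMuckenhoupt s t w) (hs : s ≤ s') (ht : t ≤ t') : BiMuckenhoupt s' t' w where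
  left_pos := h.left_pos.trans_le hs
  right_pos := h.right_pos.trans_le ht
  aemeasurable := h.aemeasurable
  ae_pos := h.ae_pos
  exists_bound := by
    obtain ⟨C, hC⟩ := h.exists_bound
    refine ⟨C, fun Q hQ => le_trans ?_ (hC Q hQ)⟩
    have := hQ.isProbabilityMeasure_cond
    have hw := h.aemeasurable.aestronglyMeasurable.mono_ac (cond_absolutelyContinuous (s := Q))
    have hw' := h.inv.aemeasurable.aestronglyMeasurable.mono_ac
      (cond_absolutelyContinuous (s := Q))
    have hs₀ := h.left_pos
    have ht₀ := h.right_pos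
    exact mul_le_mul'
      (eLpNorm'_le_eLpNorm'_of_exponent_le (inv_pos.2 (hs₀.trans_le hs)) (by gcongr) _ hw)
      (eLpNorm'_le_eLpNorm'_of_exponent_le (inv_pos.2 (ht₀.trans_le ht)) (by gcongr) _ hw')

theorem mul (h : BiMuckenhoupt s t w) (h' : BiMuckenhoupt s' t' w') :
    BiMuckenhoupt (s + s') (t + t') (w * w') where
  left_pos := add_pos h.left_pos h'.left_pos
  right_pos := add_pos h.right_pos h'.right_pos
  aemeasurable := h.aemeasurable.mul h'.aemeasurable
  ae_pos := by filter_upwards [h.ae_pos, h'.ae_pos] with x hx hx' using mul_pos hx hx'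
  exists_bound := by
    obtain ⟨C, hC⟩ := h.exists_bound
    obtain ⟨C', hC'⟩ := h'.exists_bound
    refine ⟨C * C', fun Q hQ => ?_⟩
    have hac := cond_absolutelyContinuous (μ := (volume : Measure (Fin d → ℝ))) (s := Q)
    calc eLpNorm' (w * w') (s + s')⁻¹ volume[|Q] * eLpNorm' (w * w')⁻¹ (t + t')⁻¹ volume[|Q]
        ≤ (eLpNorm' w s⁻¹ volume[|Q] * eLpNorm' w' s'⁻¹ volume[|Q]) *
            (eLpNorm' w⁻¹ t⁻¹ volume[|Q] * eLpNorm' w'⁻¹ t'⁻¹ volume[|Q]) := by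
          rw [mul_inv]
          gcongr
          · exact eLpNorm'_mul_le_mul_eLpNorm' (h.aemeasurable.mono_ac hac).aestronglyMeasurable
              (h'.aemeasurable.mono_ac hac).aestronglyMeasurable h.left_pos h'.left_pos
          · exact eLpNorm'_mul_le_mul_eLpNorm'
              (h.inv.aemeasurable.mono_ac hac).aestronglyMeasurable
              (h'.inv.aemeasurable.mono_ac hac).aestronglyMeasurable h.right_pos h'.right_pos
      _ = (eLpNorm' w s⁻¹ volume[|Q] * eLpNorm' w⁻¹ t⁻¹ volume[|Q]) *
            (eLpNorm' w' s'⁻¹ volume[|Q] * eLpNorm' w'⁻¹ t'⁻¹ volume[|Q]) := by ring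
      _ ≤ (C * C' : ℝ≥0) := by
          rw [ENNReal.coe_mul]
          exact mul_le_mul' (hC Q hQ) (hC' Q hQ)

theorem eLpNorm'_ne_zero (h : BiMuckenhoupt s t w) (hQ : IsCube Q) {a : ℝ} (ha : 0 < a) :
    eLpNorm' w a volume[|Q] ≠ 0 := by
  have := hQ.isProbabilityMeasure_cond
  rw [Ne, eLpNorm'_eq_zero_iff ha
    (h.aemeasurable.mono_ac cond_absolutelyContinuous).aestronglyMeasurable]
  intro hzero
  obtain ⟨x, hx, hx₀⟩ := ((ae_cond_of_ae h.ae_pos).and hzero).exists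
  exact hx.ne' hx₀

theorem eLpNorm'_ne_top (h : BiMuckenhoupt s t w) (hQ : IsCube Q) :
    eLpNorm' w s⁻¹ volume[|Q] ≠ ∞ := by
  obtain ⟨C, hC⟩ := h.exists_bound
  exact (ENNReal.lt_top_of_mul_ne_top_left (ne_top_of_le_ne_top coe_ne_top (hC Q hQ))
    (h.inv.eLpNorm'_ne_zero hQ (inv_pos.2 h.right_pos))).ne

theorem lintegral_box_ne_top (h : BiMuckenhoupt s t w) {I : Box (Fin d)} {r : ℝ}
    (hI : IsCubicBox I r) : ∫⁻ x in I, ‖w x‖ₑ ^ s⁻¹ ≠ ∞ := by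
  have hs := inv_pos.2 h.left_pos
  rw [← measure_mul_setLAverage _ (volume_box_ne_top I), setLAverage_eq_lintegral_cond_Icc,
    lintegral_rpow_enorm_eq_rpow_eLpNorm' hs]
  exact ENNReal.mul_ne_top (volume_box_ne_top I)
    (ENNReal.rpow_ne_top_of_nonneg hs.le (h.eLpNorm'_ne_top hI.isCube_Icc))

theorem exists_lintegral_box_le (h : BiMuckenhoupt s t w) :
    ∃ D : ℝ≥0, ∀ (J : Box (Fin d)) (ρ : ℝ), IsCubicBox J ρ → ∀ T ⊆ (J : Set (Fin d → ℝ)),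
      MeasurableSet T → volume (J : Set (Fin d → ℝ)) ≤ 2 * volume T →
        ∫⁻ x in J, ‖w x‖ₑ ^ s⁻¹ ≤ D * ∫⁻ x in T, ‖w x‖ₑ ^ s⁻¹ := by
  obtain ⟨C, hC⟩ := h.exists_bound
  have hs := h.left_pos
  have hst : 0 ≤ s + t := add_nonneg hs.le h.right_pos.le
  refine ⟨(2 ^ (s + t) * C) ^ s⁻¹, fun J ρ hJ T hTJ hT hvol => ?_⟩
  have hCJ := hC _ hJ.isCube_Icc
  rw [cond_Icc_box_eq] at hCJ
  have hvol_cond : 1 ≤ 2 * volume[|(J : Set (Fin d → ℝ))] T := by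
    rw [cond_apply J.measurableSet_coe, Set.inter_eq_right.2 hTJ, mul_left_comm,
      ← ENNReal.div_eq_inv_mul, ENNReal.le_div_iff_mul_le (.inl (volume_box_ne_zero J))
        (.inl (volume_box_ne_top J)), one_mul]
    exact hvol
  have hle := lintegral_enorm_rpow_le_of_one_le_two_mul
    (h.aemeasurable.mono_ac cond_absolutelyContinuous) (ae_cond_of_ae h.ae_pos) hs h.right_pos
    hCJ hvol_cond
  rw [ProbabilityTheory.cond, Measure.restrict_smul, lintegral_smul_measure,
    lintegral_smul_measure, smul_eq_mul, smul_eq_mul, Measure.restrict_restrict hT,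
    Set.inter_eq_left.2 hTJ, mul_left_comm,
    ENNReal.mul_le_mul_iff_right (ENNReal.inv_ne_zero.2 (volume_box_ne_top J))
      (ENNReal.inv_ne_top.2 (volume_box_ne_zero J))] at hle
  rw [ENNReal.coe_rpow_of_nonneg _ (inv_pos.2 hs).le, ENNReal.coe_mul,
    ENNReal.coe_rpow_of_nonneg _ hst]
  exact hle

theorem exists_reverseHolder (h : BiMuckenhoupt s t w) :
    ∃ (ε : ℝ) (K : ℝ≥0), 0 < ε ∧ ∀ Q, IsCube Q →
      ∫⁻ x, (‖w x‖ₑ ^ s⁻¹) ^ (1 + ε) ∂volume[|Q] ≤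
        K * (∫⁻ x, ‖w x‖ₑ ^ s⁻¹ ∂volume[|Q]) ^ (1 + ε) := by
  have hfin := fun (J : Box (Fin d)) (ρ : ℝ) => h.lintegral_box_ne_top (I := J) (r := ρ)
  obtain ⟨D, hD⟩ := h.exists_lintegral_box_le
  have hβ : 1 - (D : ℝ≥0∞)⁻¹ < 1 := ENNReal.sub_lt_self one_ne_top one_ne_zero (by simp)
  obtain ⟨ε, K, hε, hK⟩ := (hasAInftyDecay_of_forall_lintegral_le hfin hD).exists_reverseHolder hβ
    (h.aemeasurable.enorm.pow_const _) hfin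
  refine ⟨ε, K, hε, fun Q hQ => ?_⟩
  obtain ⟨I, r, hI, rfl⟩ := hQ.exists_isCubicBox
  simpa only [setLAverage_eq_lintegral_cond_Icc] using hK I r hI

theorem exists_lt_left (h : BiMuckenhoupt s t w) : ∃ s' < s, BiMuckenhoupt s' t w := by
  obtain ⟨ε, K, hε, hK⟩ := h.exists_reverseHolder
  obtain ⟨C, hC⟩ := h.exists_bound
  have hs := h.left_pos
  have hs' : 0 < s / (1 + ε) := by positivity
  refine ⟨s / (1 + ε), div_lt_self hs (by linarith), hs', h.right_pos, h.aemeasurable, h.ae_pos,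
    K ^ (s / (1 + ε)) * C, fun Q hQ => ?_⟩
  have hle : eLpNorm' w (s / (1 + ε))⁻¹ volume[|Q] ≤
      K ^ (s / (1 + ε)) * eLpNorm' w s⁻¹ volume[|Q] :=
    calc eLpNorm' w (s / (1 + ε))⁻¹ volume[|Q]
        = (∫⁻ x, (‖w x‖ₑ ^ s⁻¹) ^ (1 + ε) ∂volume[|Q]) ^ (s / (1 + ε)) := by
          simp only [eLpNorm'_eq_lintegral_enorm, ← ENNReal.rpow_mul, one_div, inv_div]
          simp only [div_eq_inv_mul]
      _ ≤ (K * (∫⁻ x, ‖w x‖ₑ ^ s⁻¹ ∂volume[|Q]) ^ (1 + ε)) ^ (s / (1 + ε)) := by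
          gcongr
          exact hK Q hQ
      _ = K ^ (s / (1 + ε)) * eLpNorm' w s⁻¹ volume[|Q] := by
          rw [ENNReal.mul_rpow_of_nonneg _ _ hs'.le, ← ENNReal.rpow_mul,
            mul_div_cancel₀ s (by positivity), eLpNorm'_eq_lintegral_enorm, one_div, inv_inv]
  calc eLpNorm' w (s / (1 + ε))⁻¹ volume[|Q] * eLpNorm' w⁻¹ t⁻¹ volume[|Q]
      ≤ K ^ (s / (1 + ε)) * (eLpNorm' w s⁻¹ volume[|Q] * eLpNorm' w⁻¹ t⁻¹ volume[|Q]) := by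
        rw [← mul_assoc]
        gcongr
    _ ≤ (K ^ (s / (1 + ε)) * C : ℝ≥0) := by
        rw [ENNReal.coe_mul, ENNReal.coe_rpow_of_nonneg _ hs'.le]
        gcongr
        exact hC Q hQ

theorem exists_lt (h : BiMuckenhoupt s t w) : ∃ s' < s, ∃ t' < t, BiMuckenhoupt s' t' w := by
  obtain ⟨s', hs', h'⟩ := h.exists_lt_left
  obtain ⟨t', ht', h''⟩ := h'.inv.exists_lt_left
  exact ⟨s', hs', t', ht', by simpa only [inv_inv] using h''.inv⟩

theorem eventually_mul_inv_rpow (h : BiMuckenhoupt s t w) (h' : BiMuckenhoupt s' t' w')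
    (a b : ℝ) : ∀ᶠ θ in 𝓝[>] (0 : ℝ),
      BiMuckenhoupt (s - θ * a) (t - θ * b) (w * fun x => w'⁻¹ x ^ θ) := by
  obtain ⟨s₁, hs₁, t₁, ht₁, h₁⟩ := h.exists_lt
  have hleft : ∀ᶠ θ in 𝓝 (0 : ℝ), s₁ + θ * t' < s - θ * a :=
    Tendsto.eventually_lt (Continuous.tendsto (by fun_prop) 0) (Continuous.tendsto (by fun_prop) 0)
      (by simpa using hs₁)
  have hright : ∀ᶠ θ in 𝓝 (0 : ℝ), t₁ + θ * s' < t - θ * b :=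
    Tendsto.eventually_lt (Continuous.tendsto (by fun_prop) 0) (Continuous.tendsto (by fun_prop) 0)
      (by simpa using ht₁)
  filter_upwards [self_mem_nhdsWithin, nhdsWithin_le_nhds hleft, nhdsWithin_le_nhds hright]
    with θ hθ hl hr
  exact (h₁.mul (h'.inv.rpow hθ)).mono hl.le hr.le

end BiMuckenhoupt

section ClassicalConstants

variable {p s t : ℝ} {w : (Fin d → ℝ) → ℝ}

theorem avgE_eq_lintegral_cond (Q : Set (Fin d → ℝ)) (g : (Fin d → ℝ) → ℝ≥0∞) :
    avgE Q g = ∫⁻ x, g x ∂volume[|Q] := by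
  rw [avgE, ProbabilityTheory.cond, lintegral_smul_measure, smul_eq_mul]

theorem avgE_oR_rpow_eq_eLpNorm' {σ : ℝ} (hw : ∀ᵐ x, 0 < w x) (hσ : 0 < σ)
    (Q : Set (Fin d → ℝ)) :
    (avgE Q fun x => oR (w x ^ σ)) ^ (1 / σ) = eLpNorm' w σ volume[|Q] := by
  rw [eLpNorm'_eq_lintegral_enorm, avgE_eq_lintegral_cond]
  congr 1
  refine lintegral_congr_ae (ae_cond_of_ae ?_)
  filter_upwards [hw] with x hx
  rw [Real.enorm_of_nonneg hx.le, oR, ENNReal.ofReal_rpow_of_nonneg hx.le hσ.le]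

theorem avgE_oR_eq_eLpNorm' (hw : ∀ᵐ x, 0 < w x) (Q : Set (Fin d → ℝ)) :
    (avgE Q fun x => oR (w x)) = eLpNorm' w 1 volume[|Q] := by
  simpa using avgE_oR_rpow_eq_eLpNorm' hw one_pos Q

theorem iSup_lt_top_iff_exists_nnreal {ι : Type*} {f : ι → ℝ≥0∞} :
    ⨆ i, f i < ∞ ↔ ∃ C : ℝ≥0, ∀ i, f i ≤ C := by
  refine ⟨fun h => ⟨(⨆ i, f i).toNNReal, fun i => ?_⟩, fun ⟨C, hC⟩ => ?_⟩
  · rw [ENNReal.coe_toNNReal h.ne]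
    exact le_iSup f i
  · exact (iSup_le hC).trans_lt ENNReal.coe_lt_top

theorem ApConst_lt_top_iff (hw : ∀ᵐ x, 0 < w x) (hp : 1 < p) :
    ApConst p w < ∞ ↔ ∃ C : ℝ≥0, ∀ Q, IsCube Q →
      eLpNorm' w 1 volume[|Q] * eLpNorm' w⁻¹ (p - 1)⁻¹ volume[|Q] ≤ C := by
  have hp' : 0 < (p - 1)⁻¹ := inv_pos.2 (sub_pos.2 hp)
  have hdual (Q : Set (Fin d → ℝ)) :
      (avgE Q fun x => oR (w x ^ (-(1 : ℝ) / (p - 1)))) ^ (p - 1) =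
        eLpNorm' w⁻¹ (p - 1)⁻¹ volume[|Q] := by
    rw [← avgE_oR_rpow_eq_eLpNorm' (w := w⁻¹) (hw.mono fun _ => inv_pos.2) hp', one_div, inv_inv,
      avgE_eq_lintegral_cond, avgE_eq_lintegral_cond]
    congr 1
    refine lintegral_congr_ae (ae_cond_of_ae ?_)
    filter_upwards [hw] with x hx
    rw [Pi.inv_apply, Real.inv_rpow hx.le, ← Real.rpow_neg hx.le, neg_div, one_div]
  simp only [ApConst, iSup_lt_top_iff_exists_nnreal, Subtype.forall, avgE_oR_eq_eLpNorm' hw, hdual]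

theorem RHConst_lt_top_iff (hw : ∀ᵐ x, 0 < w x) (hs : 0 < s) :
    RHConst s w < ∞ ↔ ∃ C : ℝ≥0, ∀ Q, IsCube Q →
      eLpNorm' w s volume[|Q] * (eLpNorm' w 1 volume[|Q])⁻¹ ≤ C := by
  simp only [RHConst, iSup_lt_top_iff_exists_nnreal, Subtype.forall,
    avgE_oR_rpow_eq_eLpNorm' hw hs, avgE_oR_eq_eLpNorm' hw]

theorem ApConst_two_le_A1Const (w : (Fin d → ℝ) → ℝ) : ApConst 2 w ≤ A1Const w := by
  refine iSup_mono fun Q => mul_le_mul_right ?_ _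
  have hone : (2 : ℝ) - 1 = 1 := by norm_num
  simp only [hone, div_one, Real.rpow_neg_one, ENNReal.rpow_one]
  rw [avgE, ← ENNReal.div_eq_inv_mul, ← setLAverage_eq]
  exact laverage_le_essSup _

theorem isCube_closedBall (x : Fin d → ℝ) {r : ℝ} (hr : 0 < r) :
    IsCube (Metric.closedBall x r) := by
  refine ⟨fun i => x i - r, 2 * r, by positivity, ?_⟩
  simp only [closedBall_pi x hr.le, Real.closedBall_eq_Icc]
  congr! 3
  ring

theorem BiMuckenhoupt.isWeight (h : BiMuckenhoupt 1 t w) : IsWeight w := by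
  refine ⟨fun x => ⟨Metric.closedBall x 1, Metric.closedBall_mem_nhds x one_pos, ?_⟩, h.ae_pos⟩
  have hQ := isCube_closedBall x one_pos
  have hint : Integrable w volume[|Metric.closedBall x 1] :=
    ⟨(h.aemeasurable.mono_ac cond_absolutelyContinuous).aestronglyMeasurable, by
      simpa only [HasFiniteIntegral, eLpNorm'_eq_lintegral_enorm, inv_one, div_one,
        ENNReal.rpow_one, lt_top_iff_ne_top] using h.eLpNorm'_ne_top hQ⟩
  rwa [ProbabilityTheory.cond, integrable_smul_measure
    (ENNReal.inv_ne_zero.2 (isCompact_closedBall x 1).measure_ne_top)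
    (ENNReal.inv_ne_top.2 (Metric.measure_closedBall_pos volume x one_pos).ne')] at hint

theorem memAp_iff_biMuckenhoupt (hp : 1 < p) : MemAp p w ↔ BiMuckenhoupt 1 (p - 1) w := by
  constructor
  · rintro ⟨hw, hA⟩
    rw [ApConst_lt_top_iff hw.2 hp] at hA
    exact ⟨one_pos, sub_pos.2 hp, hw.1.aestronglyMeasurable.aemeasurable, hw.2,
      by simpa only [inv_one] using hA⟩
  · intro h
    refine ⟨h.isWeight, ?_⟩
    rw [ApConst_lt_top_iff h.ae_pos hp]
    simpa only [inv_one] using h.exists_bound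

theorem BiMuckenhoupt.RHConst_lt_top (h : BiMuckenhoupt s t w) : RHConst s⁻¹ w < ∞ := by
  rw [RHConst_lt_top_iff h.ae_pos (inv_pos.2 h.left_pos)]
  obtain ⟨C, hC⟩ := h.exists_bound
  refine ⟨C, fun Q hQ => le_trans ?_ (hC Q hQ)⟩
  have := hQ.isProbabilityMeasure_cond
  have hone : 1 ≤ eLpNorm' w 1 volume[|Q] * eLpNorm' w⁻¹ t⁻¹ volume[|Q] := by
    simpa only [measure_univ, ENNReal.one_rpow, inv_one] using
      measure_univ_rpow_le_eLpNorm'_mul_eLpNorm'_inv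
        (h.aemeasurable.mono_ac (cond_absolutelyContinuous (s := Q))) (ae_cond_of_ae h.ae_pos)
        one_pos h.right_pos
  gcongr
  exact (ENNReal.inv_le_iff_le_mul (fun _ => h.eLpNorm'_ne_zero hQ one_pos)
    (fun _ => h.inv.eLpNorm'_ne_zero hQ (inv_pos.2 h.right_pos))).2 hone

theorem biMuckenhoupt_of_RHConst_lt_top (h : BiMuckenhoupt 1 t w) (hs : 0 < s)
    (hRH : RHConst s⁻¹ w < ∞) : BiMuckenhoupt s t w where
  left_pos := hs
  right_pos := h.right_pos
  aemeasurable := h.aemeasurable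
  ae_pos := h.ae_pos
  exists_bound := by
    rw [RHConst_lt_top_iff h.ae_pos (inv_pos.2 hs)] at hRH
    obtain ⟨C, hC⟩ := hRH
    obtain ⟨C', hC'⟩ := h.exists_bound
    refine ⟨C * C', fun Q hQ => ?_⟩
    have hone : (eLpNorm' w 1 volume[|Q])⁻¹ * eLpNorm' w 1 volume[|Q] = 1 :=
      ENNReal.inv_mul_cancel (h.eLpNorm'_ne_zero hQ one_pos)
        (by simpa only [inv_one] using h.eLpNorm'_ne_top hQ)
    calc eLpNorm' w s⁻¹ volume[|Q] * eLpNorm' w⁻¹ t⁻¹ volume[|Q]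
        = (eLpNorm' w s⁻¹ volume[|Q] * (eLpNorm' w 1 volume[|Q])⁻¹) *
            (eLpNorm' w 1⁻¹ volume[|Q] * eLpNorm' w⁻¹ t⁻¹ volume[|Q]) := by
          rw [inv_one, mul_assoc, ← mul_assoc _ _ (eLpNorm' w⁻¹ t⁻¹ _), hone, one_mul]
      _ ≤ (C * C' : ℝ≥0) := by
          rw [ENNReal.coe_mul]
          exact mul_le_mul' (hC Q hQ) (hC' Q hQ)

theorem conjExp_eq_inv_one_sub_inv (ht : t ≠ 0) : conjExp t = (1 - t⁻¹)⁻¹ := by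
  rw [conjExp, inv_eq_one_div t, one_sub_div ht, inv_div]

theorem memLR_iff_biMuckenhoupt {pm pp q : ℝ} (hpm : 0 < pm) (hq : q ∈ Set.Ioo pm pp) :
    MemLR pm pp q w ↔ BiMuckenhoupt (1 - q / pp) (q / pm - 1) w := by
  have hq₀ : 0 < q := hpm.trans hq.1
  have hpp₀ : 0 < pp := hq₀.trans hq.2
  have hconj : conjExp (pp / q) = (1 - q / pp)⁻¹ := by
    rw [conjExp_eq_inv_one_sub_inv (by positivity), inv_div]
  have hs : 0 < 1 - q / pp := sub_pos.2 ((div_lt_one hpp₀).2 hq.2)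
  have hs₁ : 1 - q / pp ≤ 1 := sub_le_self 1 (by positivity)
  have hA := memAp_iff_biMuckenhoupt (w := w) ((one_lt_div hpm).2 hq.1)
  rw [MemLR, hconj]
  constructor
  · rintro ⟨hw, -, hAp, hRH⟩
    exact biMuckenhoupt_of_RHConst_lt_top (hA.1 ⟨hw, hAp hq.1⟩) hs (hRH hq.2)
  · intro h
    obtain ⟨hw, hAp⟩ := hA.2 (h.mono hs₁ le_rfl)
    exact ⟨hw, fun h₀ => absurd h₀ hq.1.ne', fun _ => hAp, fun _ => h.RHConst_lt_top⟩

theorem MemLR.exists_memAp {pm pp q : ℝ} (hw : MemLR pm pp q w) (hpm : 0 < pm) (hq : pm ≤ q) :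
    ∃ p, 1 < p ∧ MemAp p w := by
  obtain ⟨hweight, hA₁, hAp, -⟩ := hw
  rcases hq.eq_or_lt with heq | hlt
  · exact ⟨2, one_lt_two, hweight, (ApConst_two_le_A1Const w).trans_lt (hA₁ heq.symm)⟩
  · exact ⟨q / pm, (one_lt_div hpm).2 hlt, hweight, hAp hlt⟩

end ClassicalConstants

end Cubes

section LimitedRange

variable {d : ℕ} {pm pp : ℝ}

theorem BiMuckenhoupt.memLR_rpow {κ l : ℝ} {u : (Fin d → ℝ) → ℝ}
    (h : BiMuckenhoupt (κ⁻¹ - l / pp) (l / pm - κ⁻¹) u) (hpm : 0 < pm) (hpp : 0 < pp)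
    (hκ : 0 < κ) : κ * l ∈ Set.Ioo pm pp ∧ MemLR pm pp (κ * l) fun x => u x ^ κ := by
  have h' := h.rpow hκ
  rw [mul_sub, mul_sub, mul_inv_cancel₀ hκ.ne', ← mul_div_assoc, ← mul_div_assoc] at h'
  have hmem : κ * l ∈ Set.Ioo pm pp :=
    ⟨(one_lt_div hpm).1 (sub_pos.1 h'.right_pos), (div_lt_one hpp).1 (sub_pos.1 h'.left_pos)⟩
  exact ⟨hmem, (memLR_iff_biMuckenhoupt hpm hmem).2 h'⟩

theorem MemLR.biMuckenhoupt_rpow {q : ℝ} {w : (Fin d → ℝ) → ℝ} (hw : MemLR pm pp q w)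
    (hpm : 0 < pm) (hq : q ∈ Set.Ioo pm pp) :
    BiMuckenhoupt (1 / q - 1 / pp) (1 / pm - 1 / q) fun x => w x ^ (1 / q) := by
  have hq₀ : 0 < q := hpm.trans hq.1
  have h := ((memLR_iff_biMuckenhoupt hpm hq).1 hw).rpow (one_div_pos.2 hq₀)
  convert h using 1 <;> field_simp

theorem rpow_one_div_eq_rpow_mul_rpow {x y q q₁ θ κ : ℝ} (hx : 0 < x) (hy : 0 < y) (hκ : κ ≠ 0) :
    x ^ (1 / q) =
      ((x ^ (1 / q) * (y ^ (1 / q₁))⁻¹ ^ θ) ^ κ) ^ κ⁻¹ * y ^ (θ / q₁) := by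
  rw [Real.rpow_rpow_inv (by positivity) hκ, Real.inv_rpow (by positivity), ← Real.rpow_mul hy.le,
    one_div_mul_eq_div, mul_assoc, inv_mul_cancel₀ (by positivity), mul_one]

theorem limited_range_interpolation_couple_general {p q q₁ : ℝ} {w w₁ : (Fin d → ℝ) → ℝ}
    (hpm : 0 < pm) (hq : q ∈ Set.Ioo pm pp) (hp : 1 < p) (hq₁ : 0 < q₁)
    (hw₁ : MemAp p w₁) (hw : MemLR pm pp q w) :
    ∃ (q₀ θ : ℝ) (w₀ : (Fin d → ℝ) → ℝ),
      q₀ ∈ Set.Ioo pm pp ∧ 0 < θ ∧ θ < 1 ∧ MemLR pm pp q₀ w₀ ∧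
      1 / q = (1 - θ) / q₀ + θ / q₁ ∧
      ∀ᵐ x ∂(volume : Measure (Fin d → ℝ)),
        w x ^ (1 / q) = w₀ x ^ ((1 - θ) / q₀) * w₁ x ^ (θ / q₁) := by
  have hpp : 0 < pp := hpm.trans (hq.1.trans hq.2)
  have hv₁ := ((memAp_iff_biMuckenhoupt hp).1 hw₁).rpow (one_div_pos.2 hq₁)
  obtain ⟨θ, hu, hθ₀, hθ₁⟩ := (((hw.biMuckenhoupt_rpow hpm hq).eventually_mul_inv_rpow hv₁
    (1 / q₁ - 1 / pp) (1 / pm - 1 / q₁)).and (Ioo_mem_nhdsGT one_pos)).exists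
  set κ := (1 / q - θ / q₁)⁻¹ with hκ_def
  have hleft : 1 / q - 1 / pp - θ * (1 / q₁ - 1 / pp) = κ⁻¹ - (1 - θ) / pp := by
    rw [hκ_def, inv_inv]; ring
  have hright : 1 / pm - 1 / q - θ * (1 / pm - 1 / q₁) = (1 - θ) / pm - κ⁻¹ := by
    rw [hκ_def, inv_inv]; ring
  rw [hleft, hright] at hu
  have hκ : 0 < κ :=
    inv_pos.1 ((div_pos (sub_pos.2 hθ₁) hpp).trans (sub_pos.1 hu.left_pos))
  obtain ⟨hq₀, hw₀⟩ := hu.memLR_rpow hpm hpp hκ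
  have hexp : (1 - θ) / (κ * (1 - θ)) = κ⁻¹ := by
    rw [mul_comm, ← div_div, div_self (sub_pos.2 hθ₁).ne', one_div]
  refine ⟨κ * (1 - θ), θ, _, hq₀, hθ₀, hθ₁, hw₀, by rw [hexp, hκ_def, inv_inv]; ring, ?_⟩
  filter_upwards [hw.1.2, hw₁.1.2] with x hx hx₁
  rw [hexp]
  exact rpow_one_div_eq_rpow_mul_rpow hx hx₁ hκ.ne'

end LimitedRange

/-- Lemma main2: limited-range interpolation couple for weights in
`A_{q/p₋} ∩ RH_{(p₊/q)'}`. -/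
theorem limited_range_interpolation_couple (d : ℕ) (pm pp q1 q : ℝ)
    (hpm : 1 ≤ pm) (hmp : pm < pp) (hq1 : q1 ∈ Set.Icc pm pp) (hq : q ∈ Set.Ioo pm pp)
    (w1 w : (Fin d → ℝ) → ℝ) (hw1 : MemLR pm pp q1 w1) (hw : MemLR pm pp q w) :
    ∃ (q0 θ : ℝ) (w0 : (Fin d → ℝ) → ℝ),
      q0 ∈ Set.Ioo pm pp ∧ 0 < θ ∧ θ < 1 ∧ MemLR pm pp q0 w0 ∧
      1 / q = (1 - θ) / q0 + θ / q1 ∧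
      ∀ᵐ x ∂(volume : Measure (Fin d → ℝ)),
        w x ^ (1 / q) = w0 x ^ ((1 - θ) / q0) * w1 x ^ (θ / q1) := by
  obtain ⟨p, hp, hw1p⟩ := hw1.exists_memAp (by linarith) hq1.1
  exact limited_range_interpolation_couple_general (by linarith) hq hp (by linarith [hq1.1])
    hw1p hw
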